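/- arXiv:math/0703452 — 7 statements merged into one kernel-verified Lean document; each statement's English description precedes it below -/
import Mathlib

section
/- For every compact set K ⊆ ℂ, the sequence of functions z ↦ (−1)^{k+1}·(2π)^{2k}/(2·(2k)!)·B_{2k}(z) converges uniformly on K to z ↦ cos(2πz) as k → ∞, where B_{2k} is the Bernoulli polynomial of even degree 2k evaluated over ℂ. -/
open Filter Real

/-- The `n`-th Bernoulli polynomial evaluated at a complex argument. -/
noncomputable def BernoulliC (n : ℕ) (z : ℂ) : ℂ :=
  Polynomial.aeval z (Polynomial.bernoulli n)

/-!
Evaluated at `0`, the Fourier expansion of the Bernoulli polynomials gives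
`(2πi)ʲ Bⱼ / j! = -(1 + (-1)ʲ) ζ(j)` for `j ≥ 2`, and `ζ(j) → 1`. Put `w = 2πiz`. For each fixed
`m`, the coefficients of `wᵐ / m!` in `(2πi)ⁿ Bₙ(z) / n!` and in `-(exp w + (-1)ⁿ exp (-w))`
therefore differ by an error that tends to `0` as `n → ∞`, and these errors are bounded uniformly
in `n` and `m`. By Tannery's theorem the two functions differ by `o(1)`, uniformly for `z` in a
bounded set. In even degree the exponentials combine into a cosine.
-/

open scoped Nat Topology

theorem tendstoUniformlyOn_tsum_smul_zero {ι α β 𝕜 E : Type*} [NormedField 𝕜]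
    [NormedAddCommGroup E] [NormedSpace 𝕜 E] [CompleteSpace E] {l : Filter ι} {s : Set α}
    {c : ι → β → 𝕜} {p : β → α → E} {u : β → ℝ} {C : ℝ} (hu : Summable u)
    (hp : ∀ b, ∀ x ∈ s, ‖p b x‖ ≤ u b) (hc : ∀ b, Tendsto (c · b) l (𝓝 0))
    (hC : ∀ i b, ‖c i b‖ ≤ C) :
    TendstoUniformlyOn (fun i x => ∑' b, c i b • p b x) (fun _ => 0) l s := by
  -- Uniform convergence to a constant is convergence along `l ×ˢ 𝓟 s`, where Tannery applies.
  rw [← tendsto_prod_principal_iff, ← tsum_zero (α := E) (L := .unconditional β)]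
  have mem_s : ∀ᶠ q : ι × α in l ×ˢ 𝓟 s, q.2 ∈ s :=
    tendsto_snd.eventually (mem_principal_self s)
  refine tendsto_tsum_of_dominated_convergence (hu.mul_left C) (fun b => ?_) ?_
  · refine ((hc b).comp tendsto_fst).zero_smul_isBoundedUnder_le ?_
    exact ⟨u b, eventually_map.2 (mem_s.mono fun q hq => hp b q.2 hq)⟩
  · filter_upwards [mem_s] with q hq b
    calc ‖c q.1 b • p b q.2‖ = ‖c q.1 b‖ * ‖p b q.2‖ := norm_smul _ _
      _ ≤ C * u b := mul_le_mul (hC q.1 b) (hp b q.2 hq) (norm_nonneg _)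
          ((norm_nonneg _).trans (hC q.1 b))

theorem tendsto_riemannZeta_ofReal_atTop :
    Tendsto (fun x : ℝ => riemannZeta x) atTop (𝓝 1) := by
  have habs : LSeries.abscissaOfAbsConv 1 < ⊤ := by
    rw [LSeries.abscissaOfAbsConv_one]
    exact EReal.coe_lt_top 1
  refine (LSeries.tendsto_atTop habs).congr' ?_
  filter_upwards [eventually_gt_atTop 1] with x hx
  exact LSeries_one_eq_riemannZeta (by simpa using hx)

/-- The number `(2πi)ʲ Bⱼ / j!`: the Bernoulli number `Bⱼ` rescaled so that the sequence stays
bounded. -/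
noncomputable def scaledBernoulli (j : ℕ) : ℂ :=
  (2 * π * Complex.I) ^ j / j ! * bernoulli j

theorem scaledBernoulli_eq_neg_mul_riemannZeta {j : ℕ} (hj : 2 ≤ j) :
    scaledBernoulli j = -((1 + (-1) ^ j) * riemannZeta j) := by
  have fourier_at_zero : HasSum (fun n : ℕ => 1 / (n : ℂ) ^ j * (1 + (-1) ^ j))
      (-scaledBernoulli j) := by
    have hasSum_fourier := hasSum_one_div_nat_pow_mul_fourier hj (Set.left_mem_Icc.2 zero_le_one)
    simpa [scaledBernoulli, bernoulliFun_eval_zero, neg_div] using hasSum_fourier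
  rw [zeta_nat_eq_tsum_of_gt_one hj, mul_comm, ← tsum_mul_right, fourier_at_zero.tsum_eq, neg_neg]

theorem norm_one_add_neg_one_pow_le (j : ℕ) : ‖(1 + (-1) ^ j : ℂ)‖ ≤ 2 :=
  calc ‖(1 + (-1) ^ j : ℂ)‖ ≤ ‖(1 : ℂ)‖ + ‖(-1 : ℂ) ^ j‖ := norm_add_le _ _
    _ = 2 := by norm_num

theorem tendsto_scaledBernoulli_add :
    Tendsto (fun j : ℕ => scaledBernoulli j + (1 + (-1) ^ j)) atTop (𝓝 0) := by
  have zeta_error : Tendsto (fun j : ℕ => 1 - riemannZeta j) atTop (𝓝 0) := by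
    simpa using (tendsto_riemannZeta_ofReal_atTop.comp tendsto_natCast_atTop_atTop).const_sub 1
  have parity_bounded : IsBoundedUnder (· ≤ ·) atTop fun j : ℕ => ‖(1 + (-1) ^ j : ℂ)‖ :=
    isBoundedUnder_of ⟨2, norm_one_add_neg_one_pow_le⟩
  refine (zeta_error.zero_mul_isBoundedUnder_le parity_bounded).congr' ?_
  filter_upwards [eventually_ge_atTop 2] with j hj
  rw [scaledBernoulli_eq_neg_mul_riemannZeta hj]
  ring

/-- The coefficient of `wᵐ / m!` in `(2πi)ⁿ Bₙ(z) / n! + exp w + (-1)ⁿ exp (-w)`, where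
`w = 2πiz`. -/
noncomputable def bernoulliExpCoeff (n m : ℕ) : ℂ :=
  (if m ≤ n then scaledBernoulli (n - m) else 0) + (1 + (-1) ^ (n + m))

theorem bernoulliExpCoeff_of_le {n m : ℕ} (h : m ≤ n) :
    bernoulliExpCoeff n m = scaledBernoulli (n - m) + (1 + (-1) ^ (n - m)) := by
  have parity : (-1 : ℂ) ^ (n + m) = (-1) ^ (n - m) := by
    rw [neg_one_pow_congr]
    grind
  rw [bernoulliExpCoeff, if_pos h, parity]

theorem tendsto_bernoulliExpCoeff (m : ℕ) :
    Tendsto (bernoulliExpCoeff · m) atTop (𝓝 0) := by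
  refine (tendsto_scaledBernoulli_add.comp (tendsto_sub_atTop_nat m)).congr' ?_
  filter_upwards [eventually_ge_atTop m] with n hn
  exact (bernoulliExpCoeff_of_le hn).symm

theorem exists_norm_bernoulliExpCoeff_le : ∃ C, ∀ n m, ‖bernoulliExpCoeff n m‖ ≤ C := by
  obtain ⟨C, hC⟩ :=
    (Metric.isBounded_range_of_tendsto _ tendsto_scaledBernoulli_add).exists_norm_le
  refine ⟨max C 2, fun n m => ?_⟩
  rcases le_or_gt m n with hmn | hmn
  · rw [bernoulliExpCoeff_of_le hmn]
    exact (hC _ ⟨n - m, rfl⟩).trans (le_max_left C 2)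
  · rw [bernoulliExpCoeff, if_neg hmn.not_ge, zero_add]
    exact (norm_one_add_neg_one_pow_le _).trans (le_max_right C 2)

theorem scaled_bernoulliC_eq_sum (n : ℕ) (z : ℂ) :
    (2 * π * Complex.I) ^ n / n ! * BernoulliC n z =
      ∑ m ∈ Finset.range (n + 1),
        scaledBernoulli (n - m) * ((2 * π * Complex.I * z) ^ m / m !) := by
  rw [BernoulliC, Polynomial.bernoulli_def, map_sum, Finset.mul_sum]
  refine Finset.sum_congr rfl fun m hm => ?_
  have hmn : m ≤ n := Finset.mem_range_succ_iff.1 hm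
  have hn : (n ! : ℂ) ≠ 0 := by exact_mod_cast n.factorial_ne_zero
  rw [Polynomial.aeval_monomial, scaledBernoulli, map_mul, map_natCast, eq_ratCast,
    Nat.cast_choose ℂ hmn, ← pow_sub_mul_pow (2 * π * Complex.I) hmn, mul_pow _ z]
  field_simp

theorem hasSum_scaled_bernoulliC (n : ℕ) (z : ℂ) :
    HasSum (fun m => (if m ≤ n then scaledBernoulli (n - m) else 0) *
        ((2 * π * Complex.I * z) ^ m / m !))
      ((2 * π * Complex.I) ^ n / n ! * BernoulliC n z) := by
  rw [scaled_bernoulliC_eq_sum]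
  have sum_eq : ∑ m ∈ Finset.range (n + 1),
        (if m ≤ n then scaledBernoulli (n - m) else 0) * ((2 * π * Complex.I * z) ^ m / m !) =
      ∑ m ∈ Finset.range (n + 1),
        scaledBernoulli (n - m) * ((2 * π * Complex.I * z) ^ m / m !) :=
    Finset.sum_congr rfl fun m hm => by rw [if_pos (Finset.mem_range_succ_iff.1 hm)]
  rw [← sum_eq]
  refine hasSum_sum_of_ne_finset_zero fun m hm => ?_
  rw [if_neg (mt Finset.mem_range_succ_iff.2 hm), zero_mul]

theorem hasSum_exp_add_neg_one_pow_mul_exp_neg (n : ℕ) (w : ℂ) :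
    HasSum (fun m => (1 + (-1) ^ (n + m)) * (w ^ m / m !))
      (Complex.exp w + (-1) ^ n * Complex.exp (-w)) := by
  have hasSum_exp (v : ℂ) : HasSum (fun m => v ^ m / m !) (Complex.exp v) := by
    simpa only [Complex.exp_eq_exp_ℂ] using NormedSpace.expSeries_div_hasSum_exp v
  refine ((hasSum_exp w).add ((hasSum_exp (-w)).mul_left ((-1) ^ n))).congr_fun fun m => ?_
  rw [neg_pow w]
  ring

theorem hasSum_bernoulliExpCoeff (n : ℕ) (z : ℂ) :
    HasSum (fun m => bernoulliExpCoeff n m * ((2 * π * Complex.I * z) ^ m / m !))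
      ((2 * π * Complex.I) ^ n / n ! * BernoulliC n z +
        (Complex.exp (2 * π * Complex.I * z) +
          (-1) ^ n * Complex.exp (-(2 * π * Complex.I * z)))) := by
  simpa only [bernoulliExpCoeff, add_mul] using
    (hasSum_scaled_bernoulliC n z).add (hasSum_exp_add_neg_one_pow_mul_exp_neg n _)

theorem tendstoUniformlyOn_scaled_bernoulliC_add_exp {s : Set ℂ} (hs : Bornology.IsBounded s) :
    TendstoUniformlyOn
      (fun (n : ℕ) z => (2 * π * Complex.I) ^ n / n ! * BernoulliC n z +
        (Complex.exp (2 * π * Complex.I * z) +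
          (-1) ^ n * Complex.exp (-(2 * π * Complex.I * z))))
      (fun _ => 0) atTop s := by
  obtain ⟨R, hR⟩ := hs.exists_norm_le
  obtain ⟨C, hC⟩ := exists_norm_bernoulliExpCoeff_le
  have norm_term_le (m : ℕ) (z : ℂ) (hz : z ∈ s) :
      ‖(2 * π * Complex.I * z) ^ m / (m ! : ℂ)‖ ≤ (2 * π * R) ^ m / (m ! : ℝ) := by
    have norm_arg : ‖2 * π * Complex.I * z‖ = 2 * π * ‖z‖ := by
      simp [abs_of_pos pi_pos]
    rw [norm_div, norm_pow, norm_arg, Complex.norm_natCast]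
    gcongr
    exact hR z hz
  have tsum_tendsto := tendstoUniformlyOn_tsum_smul_zero
    (Real.summable_pow_div_factorial (2 * π * R)) norm_term_le tendsto_bernoulliExpCoeff hC
  simpa only [smul_eq_mul, (hasSum_bernoulliExpCoeff _ _).tsum_eq] using tsum_tendsto

theorem scaled_bernoulliC_two_mul_sub_cos (k : ℕ) (z : ℂ) :
    (-1 : ℂ) ^ (k + 1) * (2 * π) ^ (2 * k) / (2 * (2 * k)!) * BernoulliC (2 * k) z -
        Complex.cos (2 * π * z) =
      -((2 * π * Complex.I) ^ (2 * k) / (2 * k)! * BernoulliC (2 * k) z +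
        (Complex.exp (2 * π * Complex.I * z) +
          (-1) ^ (2 * k) * Complex.exp (-(2 * π * Complex.I * z)))) / 2 := by
  have I_pow : Complex.I ^ (2 * k) = (-1) ^ k := by rw [pow_mul, Complex.I_sq]
  rw [Complex.cos, mul_pow _ Complex.I, I_pow, (even_two_mul k).neg_one_pow]
  ring_nf

theorem bernoulli_even_tendstoUniformlyOn_cos_general {s : Set ℂ} (hs : Bornology.IsBounded s) :
    TendstoUniformlyOn
      (fun (k : ℕ) (z : ℂ) =>
        (-1 : ℂ) ^ (k + 1) * (2 * (π : ℂ)) ^ (2 * k) / (2 * ((2 * k).factorial : ℂ)) *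
          BernoulliC (2 * k) z)
      (fun z => Complex.cos (2 * (π : ℂ) * z)) atTop s := by
  have error_tendsto := Metric.tendstoUniformlyOn_iff.1
    (tendstoUniformlyOn_scaled_bernoulliC_add_exp hs)
  have two_mul_atTop : Tendsto (2 * · : ℕ → ℕ) atTop atTop :=
    tendsto_id.const_mul_atTop' two_pos
  refine Metric.tendstoUniformlyOn_iff.2 fun ε hε => ?_
  filter_upwards [two_mul_atTop.eventually (error_tendsto ε hε)] with k hk z hz
  have norm_error_lt := hk z hz
  rw [dist_zero_left] at norm_error_lt
  rw [dist_comm, dist_eq_norm, scaled_bernoulliC_two_mul_sub_cos, norm_div, norm_neg,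
    Complex.norm_ofNat]
  exact (half_le_self (norm_nonneg _)).trans_lt norm_error_lt

/-- On every compact subset of `ℂ`, the rescaled even-degree Bernoulli polynomials
`(-1)^{k+1} (2π)^{2k} / (2 (2k)!) · B_{2k}(z)` converge uniformly to `cos (2πz)`. -/
theorem bernoulli_even_tendstoUniformlyOn_cos (K : Set ℂ) (hK : IsCompact K) :
    TendstoUniformlyOn
      (fun (k : ℕ) (z : ℂ) =>
        (-1 : ℂ) ^ (k + 1) * (2 * (π : ℂ)) ^ (2 * k) / (2 * ((2 * k).factorial : ℂ)) *
          BernoulliC (2 * k) z)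
      (fun z => Complex.cos (2 * (π : ℂ) * z)) atTop K :=
  bernoulli_even_tendstoUniformlyOn_cos_general hK.isBounded
end

section
/- (Hurwitz) For every integer n ≥ 2 and every real number x, B_n({x}) = −(n!/(2πi)^n)·∑_{k ∈ ℤ, k ≠ 0} e^{2πikx}/k^n, where {x} = x − ⌊x⌋ is the fractional part of x and the series converges absolutely. -/
/-!
Integrating by parts, the `k`-th Fourier coefficient of `B_n` on `[0, 1]` is `-n! / (2πik)^n` for
`k ≠ 0`, while the mean value of `B_n` is zero. For `n ≥ 2` the coefficients are summable and
`B_n 0 = B_n 1`, so the Fourier series converges to `B_n` on all of `[0, 1]`. Its terms are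
characters of `ℝ / ℤ`, hence unchanged when `{x}` is replaced by `x`.
-/

open Filter Real Complex

theorem bernoulliC_ofReal (n : ℕ) (x : ℝ) : BernoulliC n x = bernoulliFun n x := by
  rw [BernoulliC, bernoulliFun, Polynomial.eval_map_algebraMap]
  exact Polynomial.aeval_algebraMap_apply ℂ x _

theorem fourier_coe_fract (k : ℤ) (x : ℝ) :
    fourier k ((Int.fract x : ℝ) : UnitAddCircle) = exp (2 * π * I * k * x) := by
  rw [AddCircle.coe_fract, fourier_coe_apply, ofReal_one, div_one]

theorem hasSum_exp_div_pow {n : ℕ} (hn : 2 ≤ n) (x : ℝ) :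
    HasSum (fun k : ℤ => exp (2 * π * I * k * x) / (k : ℂ) ^ n)
      (-(2 * π * I) ^ n / n.factorial * BernoulliC n (Int.fract x : ℝ)) := by
  have hx : Int.fract x ∈ Set.Icc (0 : ℝ) 1 := ⟨Int.fract_nonneg x, (Int.fract_lt_one x).le⟩
  simpa only [fourier_coe_fract, bernoulliC_ofReal, one_div_mul_eq_div] using
    hasSum_one_div_pow_mul_fourier_mul_bernoulliFun hn hx

theorem hasSum_exp_div_pow_ne_zero {n : ℕ} (hn : 2 ≤ n) (x : ℝ) :
    HasSum (fun k : {k : ℤ // k ≠ 0} => exp (2 * π * I * (k : ℤ) * x) / ((k : ℤ) : ℂ) ^ n)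
      (-(2 * π * I) ^ n / n.factorial * BernoulliC n (Int.fract x : ℝ)) := by
  refine (hasSum_subtype_iff_of_support_subset (s := {k : ℤ | k ≠ 0}) ?_).mpr
    (hasSum_exp_div_pow hn x)
  -- The term at `k = 0` is a division by `0 ^ n = 0`, which gives `0`.
  rintro k hk rfl
  simp [show n ≠ 0 by lia] at hk

/-- Hurwitz's Fourier expansion of the Bernoulli polynomials: for `n ≥ 2` and real `x`,
`B_n({x}) = -(n!/(2πi)^n) ∑_{k ≠ 0} e^{2πikx}/k^n`, the series converging absolutely. -/
theorem bernoulli_fourier_series (n : ℕ) (hn : 2 ≤ n) (x : ℝ) :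
    Summable (fun k : {k : ℤ // k ≠ 0} =>
      ‖(Complex.exp (2 * (π : ℂ) * Complex.I * ((k : ℤ) : ℂ) * (x : ℂ)) /
        ((k : ℤ) : ℂ) ^ n)‖) ∧
    BernoulliC n ((Int.fract x : ℝ) : ℂ) =
      -((n.factorial : ℂ) / (2 * (π : ℂ) * Complex.I) ^ n) *
        ∑' k : {k : ℤ // k ≠ 0},
          Complex.exp (2 * (π : ℂ) * Complex.I * ((k : ℤ) : ℂ) * (x : ℂ)) /
            ((k : ℤ) : ℂ) ^ n := by
  have hsum := hasSum_exp_div_pow_ne_zero hn x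
  refine ⟨hsum.summable.norm, ?_⟩
  have hfactorial : (n.factorial : ℂ) ≠ 0 := Nat.cast_ne_zero.mpr n.factorial_ne_zero
  have hpow : (2 * π * I) ^ n ≠ 0 := pow_ne_zero n two_pi_I_ne_zero
  rw [hsum.tsum_eq, ← mul_assoc, neg_div, neg_mul_neg, div_mul_div_cancel₀ hpow,
    div_self hfactorial, one_mul]
end

section
/- For every integer n ≥ 1 and every real number y ≥ 0, B_n(y) − B_n({y}) ≤ y^n − {y}^n, where {y} = y − ⌊y⌋ is the fractional part of y. -/
/-- The `n`-th Bernoulli polynomial evaluated at a real argument. -/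
noncomputable def BernoulliR (n : ℕ) (x : ℝ) : ℝ :=
  Polynomial.aeval x (Polynomial.bernoulli n)

/-!
The function `f x = x ^ n - B_n(x)` satisfies
`f (x + 1) - f x = (x + 1) ^ n - x ^ n - n * x ^ (n - 1)`, which is nonnegative for `x ≥ 0` by
Bernoulli's inequality. Climbing from `{y}` to `y` in unit steps gives `f {y} ≤ f y`.
-/

theorem aeval_bernoulli_add_one {A : Type*} [CommRing A] [Algebra ℚ A] (n : ℕ) (x : A) :
    Polynomial.aeval (x + 1) (Polynomial.bernoulli n) =
      Polynomial.aeval x (Polynomial.bernoulli n) + n * x ^ (n - 1) := by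
  simpa [Polynomial.aeval_comp, add_comm x 1] using
    congrArg (Polynomial.aeval x) (Polynomial.bernoulli_comp_one_add_X n)

theorem apply_fract_le_of_le_apply_add_one {R α : Type*} [Ring R] [LinearOrder R]
    [IsStrictOrderedRing R] [FloorRing R] [Preorder α] {f : R → α}
    (hf : ∀ x, 0 ≤ x → f x ≤ f (x + 1)) {y : R} (hy : 0 ≤ y) : f (Int.fract y) ≤ f y := by
  have hmono : Monotone fun m : ℕ ↦ f (Int.fract y + m) :=
    monotone_nat_of_le_succ fun m ↦ by
      simpa [add_assoc] using hf _ (add_nonneg (Int.fract_nonneg y) m.cast_nonneg)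
  have hfloor : Int.fract y + (⌊y⌋₊ : R) = y := by
    rw [natCast_floor_eq_intCast_floor hy, Int.fract_add_floor]
  simpa [hfloor] using hmono (Nat.zero_le ⌊y⌋₊)

section OrderedAlgebra

variable {R : Type*} [CommRing R] [LinearOrder R] [IsStrictOrderedRing R] [Algebra ℚ R]

theorem pow_sub_aeval_bernoulli_le_add_one (n : ℕ) {x : R} (hx : 0 ≤ x) :
    x ^ n - Polynomial.aeval x (Polynomial.bernoulli n) ≤
      (x + 1) ^ n - Polynomial.aeval (x + 1) (Polynomial.bernoulli n) := by
  have hpow : x ^ n + n * x ^ (n - 1) * 1 ≤ (x + 1) ^ n :=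
    pow_add_mul_le_add_pow hx (by positivity) n
  rw [aeval_bernoulli_add_one]
  linarith

theorem bernoulli_sub_bernoulli_fract_upper_general [FloorRing R] (n : ℕ) {y : R}
    (hy : 0 ≤ y) :
    Polynomial.aeval y (Polynomial.bernoulli n) -
        Polynomial.aeval (Int.fract y) (Polynomial.bernoulli n) ≤
      y ^ n - Int.fract y ^ n := by
  have hfract : Int.fract y ^ n - Polynomial.aeval (Int.fract y) (Polynomial.bernoulli n) ≤
      y ^ n - Polynomial.aeval y (Polynomial.bernoulli n) :=
    apply_fract_le_of_le_apply_add_one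
      (f := fun x ↦ x ^ n - Polynomial.aeval x (Polynomial.bernoulli n))
      (fun _ ↦ pow_sub_aeval_bernoulli_le_add_one n) hy
  linarith

end OrderedAlgebra

/-- For `n ≥ 1` and real `y ≥ 0`, `B_n(y) - B_n({y}) ≤ y^n - {y}^n`. -/
theorem bernoulli_sub_bernoulli_fract_upper (n : ℕ) (hn : 1 ≤ n) (y : ℝ) (hy : 0 ≤ y) :
    BernoulliR n y - BernoulliR n (Int.fract y) ≤ y ^ n - Int.fract y ^ n :=
  bernoulli_sub_bernoulli_fract_upper_general n hy
end

section
/- For every integer n ≥ 1 and every real number y ≥ 1, B_n(y) − B_n({y}) ≥ (y − 1)^n − {y}^n, where {y} = y − ⌊y⌋ is the fractional part of y. -/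
/-!
Telescoping `B_n(x + 1) - B_n(x) = n x ^ (n - 1)` from `x = {y}` up to `y` turns the left Riemann
sum of the derivative of `t ^ n` over unit steps into `B_n(y) - B_n({y})`. Discarding its first
term leaves the right Riemann sum over `[{y}, y - 1]`, which bounds the integral
`(y - 1) ^ n - {y} ^ n` from above because the derivative is increasing.
-/

open Finset

section Telescoping

variable {A : Type*} [CommRing A] [Algebra ℚ A]

theorem aeval_add_one_bernoulli (n : ℕ) (x : A) :
    Polynomial.aeval (x + 1) (Polynomial.bernoulli n) =
      Polynomial.aeval x (Polynomial.bernoulli n) + n * x ^ (n - 1) := by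
  have h := congrArg (Polynomial.aeval x) (Polynomial.bernoulli_comp_one_add_X n)
  simpa [Polynomial.aeval_comp, add_comm (1 : A)] using h

theorem aeval_add_natCast_bernoulli_sub (n : ℕ) (x : A) (m : ℕ) :
    Polynomial.aeval (x + m) (Polynomial.bernoulli n) -
        Polynomial.aeval x (Polynomial.bernoulli n) =
      n * ∑ i ∈ range m, (x + i) ^ (n - 1) := by
  have telescope :=
    sum_range_sub (fun i : ℕ ↦ Polynomial.aeval (x + i) (Polynomial.bernoulli n)) m
  simpa [← add_assoc, aeval_add_one_bernoulli, mul_sum] using telescope.symm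

end Telescoping

section PowerSums

variable {R : Type*} [CommRing R] [LinearOrder R] [IsOrderedRing R]

theorem pow_sub_pow_le_of_abs_le {a b : R} (h : |b| ≤ a) (n : ℕ) :
    a ^ n - b ^ n ≤ (a - b) * n * a ^ (n - 1) := by
  have ha : |a| = a := abs_of_nonneg ((abs_nonneg b).trans h)
  have hab : |a - b| = a - b := abs_of_nonneg (sub_nonneg.2 ((le_abs_self b).trans h))
  calc a ^ n - b ^ n ≤ |a ^ n - b ^ n| := le_abs_self _
    _ ≤ |a - b| * n * max |a| |b| ^ (n - 1) := abs_pow_sub_pow_le a b n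
    _ = (a - b) * n * a ^ (n - 1) := by rw [hab, ha, max_eq_left h]

theorem add_one_pow_sub_pow_le {x : R} (hx : 0 ≤ x) (n : ℕ) :
    (x + 1) ^ n - x ^ n ≤ n * (x + 1) ^ (n - 1) := by
  have h : |x| ≤ x + 1 := by
    rw [abs_of_nonneg hx]
    exact le_add_of_nonneg_right zero_le_one
  simpa using pow_sub_pow_le_of_abs_le h n

theorem add_natCast_pow_sub_pow_le {x : R} (hx : 0 ≤ x) (n m : ℕ) :
    (x + m) ^ n - x ^ n ≤ n * ∑ i ∈ range (m + 1), (x + i) ^ (n - 1) := by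
  calc (x + m) ^ n - x ^ n
      = ∑ i ∈ range m, ((x + i + 1) ^ n - (x + i) ^ n) := by
        simpa [add_assoc] using (sum_range_sub (fun i : ℕ ↦ (x + i) ^ n) m).symm
    _ ≤ ∑ i ∈ range m, n * (x + i + 1) ^ (n - 1) :=
        sum_le_sum fun i _ ↦ add_one_pow_sub_pow_le (by positivity) n
    _ = n * ∑ i ∈ range m, (x + (i + 1 : ℕ)) ^ (n - 1) := by
        simp only [mul_sum, Nat.cast_add_one, add_assoc]
    _ ≤ n * ∑ i ∈ range (m + 1), (x + i) ^ (n - 1) := by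
        rw [sum_range_succ']
        gcongr
        exact le_add_of_nonneg_right (by positivity)

end PowerSums

/-- For `n ≥ 1` and real `y ≥ 1`, `B_n(y) - B_n({y}) ≥ (y - 1)^n - {y}^n`. -/
theorem bernoulli_sub_bernoulli_fract_lower (n : ℕ) (hn : 1 ≤ n) (y : ℝ) (hy : 1 ≤ y) :
    (y - 1) ^ n - Int.fract y ^ n ≤ BernoulliR n y - BernoulliR n (Int.fract y) := by
  obtain ⟨m, hm⟩ : ∃ m : ℕ, ⌊y⌋ = 1 + m :=
    Int.exists_add_of_le (Int.le_floor.2 (by exact_mod_cast hy))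
  have y_eq : y = Int.fract y + (m + 1 : ℕ) := by
    have h := Int.fract_add_floor y
    rw [hm] at h
    push_cast at h ⊢
    linarith
  have y_sub_one_eq : y - 1 = Int.fract y + m := by
    push_cast at y_eq
    linarith
  calc (y - 1) ^ n - Int.fract y ^ n
      = (Int.fract y + m) ^ n - Int.fract y ^ n := by rw [y_sub_one_eq]
    _ ≤ n * ∑ i ∈ range (m + 1), (Int.fract y + i) ^ (n - 1) :=
        add_natCast_pow_sub_pow_le (Int.fract_nonneg y) n m
    _ = BernoulliR n (Int.fract y + (m + 1 : ℕ)) - BernoulliR n (Int.fract y) :=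
        (aeval_add_natCast_bernoulli_sub n (Int.fract y) (m + 1)).symm
    _ = BernoulliR n y - BernoulliR n (Int.fract y) := by rw [← y_eq]
end

section
/- (Dieudonné) For every ε with 0 < ε < 1, sup over complex z with 0 < |z| ≤ 1 − ε of |n!·(e^{nz} − P_n(nz))/(nz)^n − 1/(1 − z)| tends to 0 as n → ∞, where P_n(w) = ∑_{k=0}^{n−1} w^k/k! is the truncated exponential series. Equivalently, n!·(e^{nz} − P_n(nz))/(nz)^n = (1/(1−z))·(1 + λ_n(z)) with λ_n → 0 uniformly on {z : 0 < |z| ≤ 1 − ε}. -/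
open Filter

/-!
Dividing the tail of the exponential series by its leading term gives
`n! (e^w - P_n(w)) / w^n = ∑_k w^k / ((n+1)⋯(n+k))`. At `w = nz` the coefficient of `z^k` is
`n^k / ((n+1)⋯(n+k))`, which is at most `1` and tends to `1` as `n → ∞`. On a disc of radius less
than `1` the series is therefore dominated by a geometric series, and Tannery's theorem, made
uniform in `z`, gives the limit `∑_k z^k = 1/(1-z)`.
-/

open scoped Topology

section Tannery

variable {ι α β E R : Type*} {l : Filter ι}

theorem tendstoUniformlyOn_tsum_of_dominated_convergence [NormedAddCommGroup E] [CompleteSpace E]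
    {f : ι → β → α → E} {g : β → α → E} {bound : β → ℝ} {s : Set α} (h_sum : Summable bound)
    (h_lim : ∀ k, TendstoUniformlyOn (f · k) (g k) l s)
    (h_bound : ∀ᶠ n in l, ∀ k, ∀ x ∈ s, ‖f n k x‖ ≤ bound k) :
    TendstoUniformlyOn (fun n x => ∑' k, f n k x) (fun x => ∑' k, g k x) l s := by
  rcases l.eq_or_neBot with rfl | _
  · exact fun _ _ => eventually_bot
  have g_bound : ∀ x ∈ s, ∀ k, ‖g k x‖ ≤ bound k := fun x hx k =>
    le_of_tendsto ((h_lim k).tendsto_at hx).norm (h_bound.mono fun n hn => hn k x hx)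
  have f_bound : ∀ᶠ q in l ×ˢ 𝓟 s, ∀ k, ‖f q.1 k q.2‖ ≤ bound k :=
    eventually_prod_principal_iff.2 (h_bound.mono fun n hn x hx k => hn k x hx)
  have mem_s : ∀ᶠ q : ι × α in l ×ˢ 𝓟 s, q.2 ∈ s :=
    eventually_prod_principal_iff.2 (.of_forall fun _ _ hx => hx)
  -- Uniform convergence on `s` is convergence along `l ×ˢ 𝓟 s`, where Tannery's theorem applies.
  simp only [tendstoUniformlyOn_iff_tendsto, uniformity_eq_comap_nhds_zero, tendsto_comap_iff,
    Function.comp_def] at h_lim ⊢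
  have tsum_sub_lim := tendsto_tsum_of_dominated_convergence (h_sum.add h_sum) h_lim <| by
    filter_upwards [f_bound, mem_s] with q hf hq k
    exact (norm_sub_le _ _).trans (add_le_add (hf k) (g_bound q.2 hq k))
  rw [tsum_zero] at tsum_sub_lim
  refine tsum_sub_lim.congr' ?_
  filter_upwards [f_bound, mem_s] with q hf hq
  exact (h_sum.of_norm_bounded hf).tsum_sub (h_sum.of_norm_bounded (g_bound q.2 hq))

theorem tendstoUniformlyOn_mul_pow [NormedRing R] [NormOneClass R] {a : ι → R} {b : R}
    (h_lim : Tendsto a l (𝓝 b)) (k : ℕ) (r : ℝ) :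
    TendstoUniformlyOn (fun n z => a n * z ^ k) (fun z => b * z ^ k) l
      (Metric.closedBall 0 r) := by
  simp only [tendstoUniformlyOn_iff_tendsto, uniformity_eq_comap_nhds_zero, tendsto_comap_iff,
    Function.comp_def, ← sub_mul]
  have sub_lim : Tendsto (fun q : ι × R => a q.1 - b) (l ×ˢ 𝓟 (Metric.closedBall 0 r)) (𝓝 0) :=
    (tendsto_sub_nhds_zero_iff.2 h_lim).comp tendsto_fst
  refine sub_lim.zero_mul_isBoundedUnder_le ⟨r ^ k, eventually_map.2 ?_⟩
  refine eventually_prod_principal_iff.2 (.of_forall fun _ z hz => ?_)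
  exact (norm_pow_le z k).trans (pow_le_pow_left₀ (norm_nonneg z) (mem_closedBall_zero_iff.1 hz) k)

theorem tendstoUniformlyOn_tsum_mul_pow [NormedRing R] [NormOneClass R] [CompleteSpace R]
    {a : ι → ℕ → R} {b : ℕ → R} {C : ℕ → ℝ} {r : ℝ} (h_sum : Summable fun k => C k * r ^ k)
    (h_lim : ∀ k, Tendsto (a · k) l (𝓝 (b k))) (h_bound : ∀ᶠ n in l, ∀ k, ‖a n k‖ ≤ C k) :
    TendstoUniformlyOn (fun n z => ∑' k, a n k * z ^ k) (fun z => ∑' k, b k * z ^ k) l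
      (Metric.closedBall 0 r) := by
  refine tendstoUniformlyOn_tsum_of_dominated_convergence h_sum
    (fun k => tendstoUniformlyOn_mul_pow (h_lim k) k r) (h_bound.mono fun n hn k z hz => ?_)
  calc ‖a n k * z ^ k‖ ≤ ‖a n k‖ * ‖z‖ ^ k := norm_mul_le_of_le le_rfl (norm_pow_le z k)
    _ ≤ C k * r ^ k := mul_le_mul (hn k)
        (pow_le_pow_left₀ (norm_nonneg z) (mem_closedBall_zero_iff.1 hz) k) (by positivity)
        ((norm_nonneg _).trans (hn k))

end Tannery

theorem norm_natCast_pow_div_ascFactorial_le_one (𝕜 : Type*) [RCLike 𝕜] (n k : ℕ) :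
    ‖(n : 𝕜) ^ k / ((n + 1).ascFactorial k : 𝕜)‖ ≤ 1 := by
  have pow_le : n ^ k ≤ (n + 1).ascFactorial k :=
    (Nat.pow_le_pow_left n.le_succ k).trans (Nat.pow_succ_le_ascFactorial (n + 1) k)
  rw [norm_div, norm_pow, RCLike.norm_natCast, RCLike.norm_natCast]
  exact div_le_one_of_le₀ (mod_cast pow_le) (Nat.cast_nonneg _)

theorem tendsto_natCast_pow_div_ascFactorial (𝕜 : Type*) [Semifield 𝕜] [TopologicalSpace 𝕜]
    [CharZero 𝕜] [ContinuousSMul ℚ≥0 𝕜] [IsTopologicalSemiring 𝕜] [ContinuousInv₀ 𝕜] (k : ℕ) :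
    Tendsto (fun n : ℕ => (n : 𝕜) ^ k / ((n + 1).ascFactorial k : 𝕜)) atTop (𝓝 1) := by
  induction k with
  | zero => simpa using tendsto_const_nhds
  | succ k ih =>
    have factor_lim := tendsto_natCast_div_add_atTop ((1 + k : ℕ) : 𝕜)
    convert! factor_lim.mul ih using 2 with n
    · rw [Nat.ascFactorial_succ, pow_succ', Nat.cast_mul, add_assoc, Nat.cast_add, mul_div_mul_comm]
    · rw [mul_one]

theorem hasSum_pow_div_ascFactorial {𝕜 : Type*} [NormedField 𝕜] [NormedAlgebra ℚ 𝕜]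
    [CompleteSpace 𝕜] (n : ℕ) {w : 𝕜} (hw : w ≠ 0) :
    HasSum (fun k => w ^ k / ((n + 1).ascFactorial k : 𝕜))
      ((n.factorial : 𝕜) *
          (NormedSpace.exp w - ∑ k ∈ Finset.range n, w ^ k / (k.factorial : 𝕜)) / w ^ n) := by
  have := algebraRat.charZero 𝕜
  have exp_tail := (hasSum_nat_add_iff' n).2 (NormedSpace.expSeries_div_hasSum_exp w)
  convert! (exp_tail.mul_left (n.factorial : 𝕜)).div_const (w ^ n) using 2 with k
  have hn : (n.factorial : 𝕜) ≠ 0 := mod_cast n.factorial_ne_zero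
  rw [add_comm k n, ← Nat.factorial_mul_ascFactorial, Nat.cast_mul, pow_add]
  field_simp

/-- Dieudonné's estimate: for `0 < ε < 1`, the functions
`z ↦ n! (e^{nz} - P_n(nz)) / (nz)^n` converge uniformly to `z ↦ 1/(1-z)` on the
punctured disc `{z : 0 < |z| ≤ 1 - ε}`, where `P_n(w) = ∑_{k=0}^{n-1} w^k/k!`. -/
theorem dieudonne_truncExp_estimate (ε : ℝ) (hε0 : 0 < ε) (hε1 : ε < 1) :
    TendstoUniformlyOn
      (fun (n : ℕ) (z : ℂ) =>
        (n.factorial : ℂ) *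
            (Complex.exp ((n : ℂ) * z) -
              ∑ k ∈ Finset.range n, ((n : ℂ) * z) ^ k / (k.factorial : ℂ)) /
          ((n : ℂ) * z) ^ n)
      (fun z => 1 / (1 - z)) atTop
      {z : ℂ | 0 < ‖z‖ ∧ ‖z‖ ≤ 1 - ε} := by
  have h_sum : Summable fun k : ℕ => 1 * (1 - ε) ^ k :=
    (summable_geometric_of_lt_one (sub_nonneg.2 hε1.le) (sub_lt_self 1 hε0)).mul_left 1
  have series_lim := (tendstoUniformlyOn_tsum_mul_pow h_sum
    (tendsto_natCast_pow_div_ascFactorial ℂ)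
    (.of_forall (norm_natCast_pow_div_ascFactorial_le_one ℂ))).mono
    fun z (hz : 0 < ‖z‖ ∧ ‖z‖ ≤ 1 - ε) => mem_closedBall_zero_iff.2 hz.2
  refine (series_lim.congr ?_).congr_right fun z hz => ?_
  · filter_upwards [eventually_ne_atTop 0] with n hn z hz
    have hnz : (n : ℂ) * z ≠ 0 := mul_ne_zero (mod_cast hn) (norm_pos_iff.1 hz.1)
    simpa only [mul_pow, mul_div_right_comm, Complex.exp_eq_exp_ℂ] using
      (hasSum_pow_div_ascFactorial n hnz).tsum_eq
  · simp only [one_mul, one_div]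
    exact tsum_geometric_of_norm_lt_one (hz.2.trans_lt (sub_lt_self 1 hε0))
end

section
/- For every real number x with |x| < 1/(2πe) there exists a sequence (x_n) of real numbers with B_n(n·x_n) = 0 for each sufficiently large n and x_n → x as n → ∞; i.e., every point of the open interval (−1/(2πe), 1/(2πe)) is an accumulation point of the rescaled real zeros of the Bernoulli polynomials. -/
/-!
On `[0, 1]`, the Fourier series shows that `Bₙ` is a cosine of amplitude `2 n! / (2π)ⁿ` up to a
relative error `ζ(2) - 1 < 3 / 4`, and translating by a natural number `m` changes `Bₙ` by at most
`n (m + 1)ⁿ`. Since `(n / e)ⁿ ≤ n!`, this change is negligible as long as `m + 1 ≤ n a` with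
`a < 1 / (2πe)`, so `Bₙ` still changes sign on `[m, m + 1]`. Taking `m = ⌊n x⌋` gives a zero within
distance `1` of `n x` for `x ≥ 0`, and the reflection `z ↦ 1 - z` handles `x < 0`.
-/

open Filter Real

open Set
open scoped Nat Topology

lemma BernoulliR_eq_bernoulliFun (n : ℕ) (x : ℝ) : BernoulliR n x = bernoulliFun n x :=
  (Polynomial.eval_map_algebraMap (Polynomial.bernoulli n) x).symm

section Translation

lemma bernoulliFun_eval_one_add (n : ℕ) (x : ℝ) :
    bernoulliFun n (1 + x) = bernoulliFun n x + n * x ^ (n - 1) := by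
  simpa [bernoulliFun, Polynomial.aeval_comp] using
    congrArg (Polynomial.aeval x) (Polynomial.bernoulli_comp_one_add_X n)

lemma bernoulliFun_eval_add_natCast (n m : ℕ) (x : ℝ) :
    bernoulliFun n (x + m) = bernoulliFun n x + n * ∑ k ∈ Finset.range m, (x + k) ^ (n - 1) := by
  induction m with
  | zero => simp
  | succ m ih =>
    rw [Nat.cast_succ, ← add_assoc, add_comm _ 1, bernoulliFun_eval_one_add, ih,
      Finset.sum_range_succ, mul_add, add_assoc]

lemma sum_range_add_pow_pred_le {x : ℝ} (hx : 0 ≤ x) (m : ℕ) {n : ℕ} (hn : n ≠ 0) :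
    ∑ k ∈ Finset.range m, (x + k) ^ (n - 1) ≤ (x + m) ^ n :=
  calc ∑ k ∈ Finset.range m, (x + k) ^ (n - 1)
      ≤ ∑ _k ∈ Finset.range m, (x + m) ^ (n - 1) := by
        gcongr with k hk
        exact (Finset.mem_range.1 hk).le
    _ = m * (x + m) ^ (n - 1) := by simp
    _ ≤ (x + m) * (x + m) ^ (n - 1) := by gcongr; linarith
    _ = (x + m) ^ n := mul_pow_sub_one hn _

lemma abs_bernoulliFun_eval_add_natCast_sub_le (n m : ℕ) {x : ℝ} (hx : 0 ≤ x) :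
    |bernoulliFun n (x + m) - bernoulliFun n x| ≤ n * (x + m) ^ n := by
  rcases eq_or_ne n 0 with rfl | hn
  · simp
  · rw [bernoulliFun_eval_add_natCast, add_sub_cancel_left, abs_of_nonneg (by positivity)]
    gcongr
    exact sum_range_add_pow_pred_le hx m hn

end Translation

section Oscillation

lemma hasSum_one_div_nat_pow_mul_cos_sub {n : ℕ} (hn : 2 ≤ n) {x : ℝ} (hx : x ∈ Icc (0 : ℝ) 1) :
    HasSum (fun j : ℕ ↦ 1 / (j : ℝ) ^ n * cos (2 * π * j * x - n * π / 2))
      (-((2 * π) ^ n / (2 * n !) * bernoulliFun n x)) := by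
  obtain ⟨k, hk⟩ := Nat.even_or_odd' n
  have hsign : (-1 : ℝ) ^ k * (-1) ^ k = 1 := by simp [← mul_pow]
  rcases hk with rfl | rfl
  · convert! (hasSum_one_div_nat_pow_mul_cos (k := k) (by lia) hx).mul_left ((-1) ^ k) using 1
    · ext j
      rw [show ((2 * k : ℕ) : ℝ) * π / 2 = k * π by push_cast; ring, cos_sub_nat_mul_pi]
      ring
    · rw [← bernoulliFun]
      linear_combination (2 * π) ^ (2 * k) / (2 * (2 * k)!) * bernoulliFun (2 * k) x * hsign
  · convert! (hasSum_one_div_nat_pow_mul_sin (k := k) (by lia) hx).mul_left ((-1) ^ k) using 1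
    · ext j
      rw [show ((2 * k + 1 : ℕ) : ℝ) * π / 2 = π / 2 + k * π by push_cast; ring, ← sub_sub,
        cos_sub_nat_mul_pi, cos_sub_pi_div_two]
      ring
    · rw [← bernoulliFun]
      linear_combination
        (2 * π) ^ (2 * k + 1) / (2 * (2 * k + 1)!) * bernoulliFun (2 * k + 1) x * hsign

lemma norm_sub_le_of_hasSum {ι E : Type*} [SeminormedAddCommGroup E] {f : ι → E} {g : ι → ℝ}
    {a : E} {b : ℝ} {i : ι} (hf : HasSum f a) (hg : HasSum g b)
    (h : ∀ j ≠ i, ‖f j‖ ≤ g j) : ‖a - f i‖ ≤ b - g i := by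
  classical
  refine (hasSum_ite_sub_hasSum hf i).norm_le_of_bounded (hasSum_ite_sub_hasSum hg i) fun j ↦ ?_
  split_ifs with hj
  · exact norm_zero.le
  · exact h j hj

lemma one_div_natCast_pow_le_one_div_natCast_pow (j : ℕ) {k n : ℕ} (hk : k ≠ 0) (hkn : k ≤ n) :
    1 / (j : ℝ) ^ n ≤ 1 / (j : ℝ) ^ k := by
  rcases j.eq_zero_or_pos with rfl | hj
  · simp [hk, show n ≠ 0 by lia]
  · have : (1 : ℝ) ≤ j := mod_cast hj
    gcongr

lemma abs_mul_bernoulliFun_add_cos_le {n : ℕ} (hn : 2 ≤ n) {x : ℝ} (hx : x ∈ Icc (0 : ℝ) 1) :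
    |(2 * π) ^ n / (2 * n !) * bernoulliFun n x + cos (2 * π * x - n * π / 2)| ≤
      π ^ 2 / 6 - 1 := by
  have hterm (j : ℕ) : ‖1 / (j : ℝ) ^ n * cos (2 * π * j * x - n * π / 2)‖ ≤ 1 / (j : ℝ) ^ 2 :=
    calc ‖1 / (j : ℝ) ^ n * cos (2 * π * j * x - n * π / 2)‖
        ≤ 1 / (j : ℝ) ^ n := by
          rw [norm_mul, norm_of_nonneg (by positivity)]
          exact mul_le_of_le_one_right (by positivity) (abs_cos_le_one _)
      _ ≤ 1 / (j : ℝ) ^ 2 := one_div_natCast_pow_le_one_div_natCast_pow j two_ne_zero hn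
  rw [← abs_neg, neg_add']
  simpa using
    norm_sub_le_of_hasSum (i := 1) (hasSum_one_div_nat_pow_mul_cos_sub hn hx) hasSum_zeta_two
      fun j _ ↦ hterm j

lemma abs_bernoulliFun_fract_add_cos_le {n : ℕ} (hn : 2 ≤ n) (t : ℝ) :
    |bernoulliFun n (Int.fract t) + 2 * (n ! / (2 * π) ^ n) * cos (2 * π * t - n * π / 2)| ≤
      3 / 2 * (n ! / (2 * π) ^ n) := by
  have hcos : cos (2 * π * Int.fract t - n * π / 2) = cos (2 * π * t - n * π / 2) := by
    rw [← cos_sub_int_mul_two_pi (2 * π * t - n * π / 2) ⌊t⌋, Int.fract]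
    ring_nf
  have hfract := abs_mul_bernoulliFun_add_cos_le hn (unitInterval.fract_mem t)
  rw [hcos] at hfract
  have hpi : π ^ 2 / 6 - 1 ≤ 3 / 4 := by nlinarith [pi_pos, pi_lt_d2]
  calc _ = |2 * (n ! / (2 * π) ^ n) * ((2 * π) ^ n / (2 * n !) * bernoulliFun n (Int.fract t) +
          cos (2 * π * t - n * π / 2))| := by
        congr 1
        field_simp
    _ = 2 * (n ! / (2 * π) ^ n) * |(2 * π) ^ n / (2 * n !) * bernoulliFun n (Int.fract t) +
          cos (2 * π * t - n * π / 2)| := by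
        rw [abs_mul, abs_of_nonneg (by positivity)]
    _ ≤ 2 * (n ! / (2 * π) ^ n) * (3 / 4) := by
        gcongr
        exact hfract.trans hpi
    _ = 3 / 2 * (n ! / (2 * π) ^ n) := by ring

lemma exists_bernoulliFun_le {n : ℕ} (hn : 2 ≤ n) :
    ∃ y ∈ Icc (0 : ℝ) 1, bernoulliFun n y ≤ -(1 / 2 * (n ! / (2 * π) ^ n)) := by
  refine ⟨Int.fract (n / 4), unitInterval.fract_mem _, ?_⟩
  have h := abs_bernoulliFun_fract_add_cos_le hn (n / 4)
  rw [show 2 * π * (n / 4 : ℝ) - n * π / 2 = 0 by ring, cos_zero] at h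
  linarith [(abs_le.1 h).2]

lemma exists_le_bernoulliFun {n : ℕ} (hn : 2 ≤ n) :
    ∃ y ∈ Icc (0 : ℝ) 1, 1 / 2 * (n ! / (2 * π) ^ n) ≤ bernoulliFun n y := by
  refine ⟨Int.fract (n / 4 + 1 / 2), unitInterval.fract_mem _, ?_⟩
  have h := abs_bernoulliFun_fract_add_cos_le hn (n / 4 + 1 / 2)
  rw [show 2 * π * (n / 4 + 1 / 2 : ℝ) - n * π / 2 = π by ring, cos_pi] at h
  linarith [(abs_le.1 h).1]

end Oscillation

section Zeros

lemma exists_bernoulliFun_eq_zero_mem_Icc {n m : ℕ} (hn : 2 ≤ n)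
    (hm : n * ((m : ℝ) + 1) ^ n < 1 / 2 * (n ! / (2 * π) ^ n)) :
    ∃ z ∈ Icc (m : ℝ) (m + 1), bernoulliFun n z = 0 := by
  have hmem {y : ℝ} (hy : y ∈ Icc (0 : ℝ) 1) : y + m ∈ Icc (m : ℝ) (m + 1) :=
    ⟨by linarith [hy.1], by linarith [hy.2]⟩
  have htranslate {y : ℝ} (hy : y ∈ Icc (0 : ℝ) 1) :
      |bernoulliFun n (y + m) - bernoulliFun n y| < 1 / 2 * (n ! / (2 * π) ^ n) := by
    refine (abs_bernoulliFun_eval_add_natCast_sub_le n m hy.1).trans_lt (lt_of_le_of_lt ?_ hm)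
    have hnonneg : 0 ≤ y + m := add_nonneg hy.1 m.cast_nonneg
    have hle : y + m ≤ m + 1 := (hmem hy).2
    gcongr
  obtain ⟨y₁, hy₁, hneg⟩ := exists_bernoulliFun_le hn
  obtain ⟨y₂, hy₂, hpos⟩ := exists_le_bernoulliFun hn
  exact isPreconnected_Icc.intermediate_value (hmem hy₁) (hmem hy₂)
    (continuous_bernoulliFun n).continuousOn
    ⟨by linarith [(abs_lt.1 (htranslate hy₁)).2], by linarith [(abs_lt.1 (htranslate hy₂)).1]⟩

lemma tendsto_self_mul_pow_div_factorial {r : ℝ} (hr₀ : 0 ≤ r) (hr : r * exp 1 < 1) :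
    Tendsto (fun n : ℕ ↦ n * (n * r) ^ n / n !) atTop (𝓝 0) := by
  refine squeeze_zero (fun n ↦ by positivity) (fun n ↦ ?_)
    (tendsto_self_mul_const_pow_of_lt_one (by positivity) hr)
  calc n * (n * r) ^ n / n ! = n * r ^ n * ((n : ℝ) ^ n / n !) := by ring
    _ ≤ n * r ^ n * exp n := by gcongr; exact pow_div_factorial_le_exp _ n.cast_nonneg n
    _ = n * (r * exp 1) ^ n := by rw [mul_pow, exp_one_pow, mul_assoc]

lemma eventually_self_mul_pow_lt_factorial_div {a : ℝ} (ha₀ : 0 ≤ a)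
    (ha : a < 1 / (2 * π * exp 1)) :
    ∀ᶠ n : ℕ in atTop, n * (n * a) ^ n < 1 / 2 * (n ! / (2 * π) ^ n) := by
  have hr : 2 * π * a * exp 1 < 1 := by
    rw [lt_div_iff₀ (by positivity)] at ha
    linarith
  filter_upwards [(tendsto_self_mul_pow_div_factorial (by positivity) hr).eventually_lt_const
    one_half_pos] with n hn
  rw [div_lt_iff₀ (by positivity)] at hn
  rw [← mul_div_assoc, lt_div_iff₀ (by positivity)]
  calc n * (n * a) ^ n * (2 * π) ^ n = n * (n * (2 * π * a)) ^ n := by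
        simp only [mul_pow]
        ring
    _ < 1 / 2 * n ! := hn

lemma eventually_exists_bernoulliFun_eq_zero_of_nonneg {x : ℝ} (hx₀ : 0 ≤ x)
    (hx : x < 1 / (2 * π * exp 1)) :
    ∀ᶠ n : ℕ in atTop, ∃ z, bernoulliFun n z = 0 ∧ |z - n * x| ≤ 1 := by
  obtain ⟨a, hxa, ha⟩ := exists_between hx
  have hroom : ∀ᶠ n : ℕ in atTop, 1 ≤ n * (a - x) :=
    (tendsto_natCast_atTop_atTop.atTop_mul_const (sub_pos.2 hxa)).eventually_ge_atTop 1
  filter_upwards [eventually_self_mul_pow_lt_factorial_div (hx₀.trans hxa.le) ha, hroom,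
    eventually_ge_atTop 2] with n hna hroom hn
  have hfloor_le : (⌊n * x⌋₊ : ℝ) ≤ n * x := Nat.floor_le (by positivity)
  have hlt_floor : n * x < ⌊n * x⌋₊ + 1 := Nat.lt_floor_add_one _
  obtain ⟨z, hz, hz₀⟩ := exists_bernoulliFun_eq_zero_mem_Icc (m := ⌊n * x⌋₊) hn <| by
    refine lt_of_le_of_lt ?_ hna
    gcongr
    linarith
  exact ⟨z, hz₀, abs_le.2 ⟨by linarith [hz.1], by linarith [hz.2]⟩⟩

lemma eventually_exists_bernoulliFun_eq_zero {x : ℝ} (hx : |x| < 1 / (2 * π * exp 1)) :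
    ∀ᶠ n : ℕ in atTop, ∃ z, bernoulliFun n z = 0 ∧ |z - n * x| ≤ 2 := by
  rcases le_total 0 x with h | h
  · rw [abs_of_nonneg h] at hx
    filter_upwards [eventually_exists_bernoulliFun_eq_zero_of_nonneg h hx] with n ⟨z, hz, hzx⟩
    exact ⟨z, hz, hzx.trans one_le_two⟩
  · rw [abs_of_nonpos h] at hx
    filter_upwards [eventually_exists_bernoulliFun_eq_zero_of_nonneg (neg_nonneg.2 h) hx]
      with n ⟨z, hz, hzx⟩
    refine ⟨1 - z, by rw [bernoulliFun_eval_one_sub, hz, mul_zero], ?_⟩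
    calc |1 - z - n * x| = |1 - (z - n * -x)| := by ring_nf
      _ ≤ |1| + |z - n * -x| := abs_sub _ _
      _ ≤ 2 := by rw [abs_one]; linarith

lemma tendsto_div_natCast_of_abs_sub_mul_le {u : ℕ → ℝ} {x C : ℝ}
    (h : ∀ᶠ n : ℕ in atTop, |u n - n * x| ≤ C) :
    Tendsto (fun n ↦ u n / n) atTop (𝓝 x) := by
  rw [tendsto_iff_dist_tendsto_zero]
  refine squeeze_zero' (.of_forall fun _ ↦ dist_nonneg) ?_ (tendsto_const_div_atTop_nhds_zero_nat C)
  filter_upwards [h, eventually_gt_atTop 0] with n hn hpos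
  have hn₀ : (0 : ℝ) < n := mod_cast hpos
  calc dist (u n / n) x = |u n - n * x| / n := by
        rw [dist_eq, ← abs_of_pos hn₀, ← abs_div, abs_of_pos hn₀]
        congr 1
        field_simp
    _ ≤ C / n := by gcongr

end Zeros

/-- Every point of the open interval `(-1/(2πe), 1/(2πe))` is an accumulation point of
the rescaled real zeros of the Bernoulli polynomials: there is a sequence `xₙ → x` with
`Bₙ(n xₙ) = 0` for all sufficiently large `n`. -/
theorem bernoulli_rescaled_real_roots_dense
    (x : ℝ) (hx : |x| < 1 / (2 * π * Real.exp 1)) :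
    ∃ xn : ℕ → ℝ,
      (∀ᶠ n : ℕ in atTop, BernoulliR n ((n : ℝ) * xn n) = 0) ∧
      Tendsto xn atTop (nhds x) := by
  obtain ⟨z, hz⟩ := (eventually_exists_bernoulliFun_eq_zero hx).choice
  refine ⟨fun n ↦ z n / n, ?_, tendsto_div_natCast_of_abs_sub_mul_le (hz.mono fun _ h ↦ h.2)⟩
  filter_upwards [hz, eventually_ne_atTop 0] with n ⟨hzero, _⟩ hn
  rw [mul_div_cancel₀ _ (Nat.cast_ne_zero.2 hn), BernoulliR_eq_bernoulliFun, hzero]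
end

section
/- The rescaled real zeros of the Bernoulli polynomials are asymptotically uniformly distributed on [−1/(2πe), 1/(2πe)]: for all real numbers a < b with [a, b] ⊆ (−1/(2πe), 1/(2πe)), the number of real zeros of B_n lying in the interval [n·a, n·b] (counted as elements of the zero set), divided by n, tends to 2·(b − a) as n → ∞. -/
open Filter Real

/-!
On `[0, 1]` Hurwitz's Fourier series shows that `-(2π)ⁿ Bₙ(x) / (2 n!)` is within `O(2⁻ⁿ)` of its
first harmonic `cos (2πx - nπ/2)`. The functional equation `Bₙ(x + 1) - Bₙ(x) = n xⁿ⁻¹` carries this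
over to `|x| ≤ ρn` at the cost of an error of order `n (2πρ)ⁿ nⁿ / n! ≤ n (2πeρ)ⁿ`, which vanishes
exactly in the range `ρ < 1 / (2πe)`. Since `Bₙ' = n Bₙ₋₁`, the approximation holds for the
derivative too, and a function that is `C¹`-close to a cosine has exactly one zero in each
half-period.
-/

section NearCosine

open Set

lemma abs_cos_lt_of_mem_Icc {δ x y z : ℝ} {j : ℤ} (hx : j * π ≤ x) (hy : y ≤ (j + 1) * π)
    (hz : z ∈ Icc x y) (hcosx : |cos x| < δ) (hcosy : |cos y| < δ) : |cos z| < δ := by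
  have abs_cos_shift (t : ℝ) : |cos t| = |cos (t - j * π)| := by
    rw [cos_sub_int_mul_pi, abs_mul, abs_neg_one_zpow, one_mul]
  have mem_Icc_shift {t : ℝ} (ht : t ∈ Icc x y) : t - j * π ∈ Icc 0 π :=
    ⟨by linarith [ht.1], by linarith [ht.2]⟩
  have hxy : x ≤ y := hz.1.trans hz.2
  have hzx := antitoneOn_cos (mem_Icc_shift (left_mem_Icc.2 hxy)) (mem_Icc_shift hz)
    (sub_le_sub_right hz.1 _)
  have hyz := antitoneOn_cos (mem_Icc_shift hz) (mem_Icc_shift (right_mem_Icc.2 hxy))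
    (sub_le_sub_right hz.2 _)
  rw [abs_cos_shift, abs_lt] at hcosx hcosy ⊢
  exact ⟨hcosy.1.trans_le hyz, hzx.trans_lt hcosx.2⟩

/-- By Rolle, `g` would vanish between two zeros of `f`, and there both `|cos|` and `|sin|` would be
less than `√2 / 2`. -/
lemma not_lt_of_zeros_near_cos {f g : ℝ → ℝ} {x y : ℝ} {j : ℤ}
    (hderiv : ∀ z ∈ Icc x y, HasDerivAt f (g z) z)
    (hcos : ∀ z ∈ Icc x y, |f z - cos z| < √2 / 2)
    (hsin : ∀ z ∈ Icc x y, |g z + sin z| < √2 / 2)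
    (hx : j * π ≤ x) (hy : y ≤ (j + 1) * π) (hfx : f x = 0) (hfy : f y = 0) : ¬x < y := by
  intro hxy
  obtain ⟨z, hz, hgz⟩ := exists_hasDerivAt_eq_zero hxy
    (fun z hz => (hderiv z hz).continuousAt.continuousWithinAt) (hfx.trans hfy.symm)
    (fun z hz => hderiv z (Ioo_subset_Icc_self hz))
  replace hz := Ioo_subset_Icc_self hz
  have abs_cos_lt {t : ℝ} (ht : t ∈ Icc x y) (hft : f t = 0) : |cos t| < √2 / 2 := by
    simpa only [hft, zero_sub, abs_neg] using hcos t ht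
  have hcosz : |cos z| < √2 / 2 := abs_cos_lt_of_mem_Icc hx hy hz
    (abs_cos_lt (left_mem_Icc.2 hxy.le) hfx) (abs_cos_lt (right_mem_Icc.2 hxy.le) hfy)
  have hsinz : |sin z| < √2 / 2 := by simpa only [hgz, zero_add] using hsin z hz
  have sq_lt_half {t : ℝ} (ht : |t| < √2 / 2) : t ^ 2 < 1 / 2 := by
    calc t ^ 2 < (√2 / 2) ^ 2 := sq_lt_sq.2 (ht.trans_le (le_abs_self _))
      _ = 1 / 2 := by rw [div_pow, sq_sqrt zero_le_two]; norm_num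
  linarith [sin_sq_add_cos_sq z, sq_lt_half hcosz, sq_lt_half hsinz]

lemma exists_zero_of_near_cos {f : ℝ → ℝ} {j : ℤ}
    (hf : ContinuousOn f (Icc (j * π) ((j + 1) * π)))
    (hleft : |f (j * π) - cos (j * π)| < 1)
    (hright : |f ((j + 1) * π) - cos ((j + 1) * π)| < 1) :
    ∃ x ∈ Ioo (j * π) ((j + 1) * π), f x = 0 := by
  have hle : j * π ≤ (j + 1) * π := by linarith [pi_pos]
  rw [cos_int_mul_pi, abs_lt] at hleft
  rw [add_one_mul, cos_add_pi, cos_int_mul_pi, ← add_one_mul, abs_lt] at hright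
  rcases Int.even_or_odd j with hj | hj
  · rw [hj.neg_one_zpow] at hleft hright
    exact intermediate_value_Ioo' hle hf ⟨by linarith, by linarith⟩
  · rw [hj.neg_one_zpow] at hleft hright
    exact intermediate_value_Ioo hle hf ⟨by linarith, by linarith⟩

lemma abs_ncard_sub_le_two {X : Type*} {s : Set X} {u : X → ℝ} {a b : ℝ} (hab : a ≤ b)
    (hmaps : MapsTo u s (Icc a b)) (hinj : InjOn (fun x => ⌊u x⌋) s)
    (hsurj : SurjOn (fun x => ⌊u x⌋) s (Ico ⌈a⌉ ⌊b⌋)) :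
    |(s.ncard : ℝ) - (b - a)| ≤ 2 := by
  have hmaps_floor : MapsTo (fun x => ⌊u x⌋) s (Icc ⌊a⌋ ⌊b⌋) := fun x hx =>
    ⟨Int.floor_le_floor (hmaps hx).1, Int.floor_le_floor (hmaps hx).2⟩
  have hfin : s.Finite := Finite.of_injOn hmaps_floor hinj (finite_Icc _ _)
  have hupper : (s.ncard : ℤ) ≤ ⌊b⌋ + 1 - ⌊a⌋ := by
    have := ncard_le_ncard_of_injOn _ hmaps_floor hinj
    rw [← Finset.coe_Icc, ncard_coe_finset, Int.card_Icc] at this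
    have := Int.floor_le_floor hab
    omega
  have hlower : ⌊b⌋ - ⌈a⌉ ≤ (s.ncard : ℤ) := by
    have := (ncard_le_ncard hsurj (hfin.image _)).trans (ncard_image_le hfin)
    rw [← Finset.coe_Ico, ncard_coe_finset, Int.card_Ico] at this
    omega
  have hupper' : (s.ncard : ℝ) ≤ ⌊b⌋ + 1 - ⌊a⌋ := mod_cast hupper
  have hlower' : (⌊b⌋ : ℝ) - ⌈a⌉ ≤ s.ncard := mod_cast hlower
  rw [abs_le]
  constructor
  · linarith [Int.lt_floor_add_one b, Int.ceil_lt_add_one a]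
  · linarith [Int.floor_le b, Int.lt_floor_add_one a]

lemma floor_div_pi_eq_iff {x : ℝ} {j : ℤ} : ⌊x / π⌋ = j ↔ j * π ≤ x ∧ x < (j + 1) * π := by
  rw [Int.floor_eq_iff, le_div_iff₀ pi_pos, div_lt_iff₀ pi_pos]

theorem abs_ncard_zeros_sub_le_of_near_cos {f g : ℝ → ℝ} {a b : ℝ} (hab : a ≤ b)
    (hderiv : ∀ x ∈ Icc a b, HasDerivAt f (g x) x)
    (hcos : ∀ x ∈ Icc a b, |f x - cos x| < √2 / 2)
    (hsin : ∀ x ∈ Icc a b, |g x + sin x| < √2 / 2) :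
    |({x | f x = 0 ∧ x ∈ Icc a b}.ncard : ℝ) - (b - a) / π| ≤ 2 := by
  rw [sub_div]
  refine abs_ncard_sub_le_two (u := (· / π)) (by gcongr)
    (fun x hx => ⟨div_le_div_of_nonneg_right hx.2.1 pi_pos.le,
      div_le_div_of_nonneg_right hx.2.2 pi_pos.le⟩) ?_ ?_
  · have not_lt_of_floor_eq {x y : ℝ} (hx : f x = 0 ∧ x ∈ Icc a b) (hy : f y = 0 ∧ y ∈ Icc a b)
        (hxy : ⌊x / π⌋ = ⌊y / π⌋) : ¬x < y :=
      have hsub : Icc x y ⊆ Icc a b := Icc_subset_Icc hx.2.1 hy.2.2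
      not_lt_of_zeros_near_cos (fun z hz => hderiv z (hsub hz)) (fun z hz => hcos z (hsub hz))
        (fun z hz => hsin z (hsub hz)) (floor_div_pi_eq_iff.1 hxy).1
        (floor_div_pi_eq_iff.1 rfl).2.le hx.1 hy.1
    exact fun x hx y hy hxy =>
      le_antisymm (not_lt.1 (not_lt_of_floor_eq hy hx hxy.symm))
        (not_lt.1 (not_lt_of_floor_eq hx hy hxy))
  · rintro j ⟨hja, hjb⟩
    have haj : a ≤ j * π := (div_le_iff₀ pi_pos).1 (Int.ceil_le.1 hja)
    have hjb : (j + 1) * π ≤ b := (le_div_iff₀ pi_pos).1 (mod_cast Int.le_floor.1 hjb)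
    have hle : j * π ≤ (j + 1) * π := by linarith [pi_pos]
    have hsub : Icc (j * π) ((j + 1) * π) ⊆ Icc a b := Icc_subset_Icc haj hjb
    have sqrt_two_div_two_lt_one : √2 / 2 < 1 := by
      rw [div_lt_one two_pos, sqrt_lt' two_pos]; norm_num
    obtain ⟨x, hx, hfx⟩ := exists_zero_of_near_cos
      (fun x hx => (hderiv x (hsub hx)).continuousAt.continuousWithinAt)
      ((hcos _ (hsub (left_mem_Icc.2 hle))).trans sqrt_two_div_two_lt_one)
      ((hcos _ (hsub (right_mem_Icc.2 hle))).trans sqrt_two_div_two_lt_one)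
    exact ⟨x, ⟨hfx, hsub (Ioo_subset_Icc_self hx)⟩, floor_div_pi_eq_iff.2 ⟨hx.1.le, hx.2⟩⟩

theorem abs_ncard_zeros_sub_le_of_near_cos_affine {f g : ℝ → ℝ} {a b ω φ : ℝ} (hω : 0 < ω)
    (hab : a ≤ b) (hderiv : ∀ x ∈ Icc a b, HasDerivAt f (ω * g x) x)
    (hcos : ∀ x ∈ Icc a b, |f x - cos (ω * x + φ)| < √2 / 2)
    (hsin : ∀ x ∈ Icc a b, |g x + sin (ω * x + φ)| < √2 / 2) :
    |({x | f x = 0 ∧ x ∈ Icc a b}.ncard : ℝ) - ω * (b - a) / π| ≤ 2 := by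
  let θ : ℝ → ℝ := fun x => ω * x + φ
  let θ' : ℝ → ℝ := fun t => (t - φ) / ω
  have hθθ' (t : ℝ) : ω * θ' t + φ = t := by simp only [θ']; field_simp; ring
  have hθ'θ (x : ℝ) : θ' (θ x) = x := by simp only [θ, θ']; field_simp; ring
  have hmem (x : ℝ) : θ x ∈ Icc (θ a) (θ b) ↔ x ∈ Icc a b := by
    simp only [θ, mem_Icc, add_le_add_iff_right, mul_le_mul_iff_right₀ hω]
  have hmem' {t : ℝ} (ht : t ∈ Icc (θ a) (θ b)) : θ' t ∈ Icc a b := by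
    rwa [← hmem, show θ (θ' t) = t from hθθ' t]
  have hzeros : {t | f (θ' t) = 0 ∧ t ∈ Icc (θ a) (θ b)} = θ '' {x | f x = 0 ∧ x ∈ Icc a b} := by
    ext t
    constructor
    · exact fun ⟨hft, ht⟩ => ⟨θ' t, ⟨hft, hmem' ht⟩, hθθ' t⟩
    · rintro ⟨x, ⟨hfx, hx⟩, rfl⟩
      exact ⟨by rwa [hθ'θ], (hmem x).2 hx⟩
  have hcount := abs_ncard_zeros_sub_le_of_near_cos (f := fun t => f (θ' t))
    (g := fun t => g (θ' t))
    (by simp only [θ]; gcongr : θ a ≤ θ b)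
    (fun t ht => by
      have hθ' : HasDerivAt θ' (1 / ω) t := ((hasDerivAt_id t).sub_const φ).div_const ω
      have := (hderiv _ (hmem' ht)).comp t hθ'
      rwa [mul_one_div, mul_div_cancel_left₀ _ hω.ne'] at this)
    (fun t ht => by simpa only [hθθ'] using hcos _ (hmem' ht))
    (fun t ht => by simpa only [hθθ'] using hsin _ (hmem' ht))
  rw [show θ b - θ a = ω * (b - a) by simp only [θ]; ring] at hcount
  rwa [hzeros, ncard_image_of_injective _ (Function.LeftInverse.injective hθ'θ)] at hcount

end NearCosine

lemma bernoulliFun_add_natCast (k : ℕ) (x : ℝ) (m : ℕ) :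
    bernoulliFun k (x + m) =
      bernoulliFun k x + ∑ i ∈ Finset.range m, k * (x + i) ^ (k - 1) := by
  have hstep (y : ℝ) : bernoulliFun k (y + 1) = bernoulliFun k y + k * y ^ (k - 1) := by
    simpa [bernoulliFun, Polynomial.aeval_comp, add_comm]
      using congr_arg (·.aeval y) (Polynomial.bernoulli_comp_one_add_X k)
  induction m with
  | zero => simp
  | succ m ih => rw [Nat.cast_succ, ← add_assoc, hstep, ih, Finset.sum_range_succ, add_assoc]

lemma abs_bernoulliFun_add_natCast_sub_le (k : ℕ) {x M : ℝ} {m : ℕ} (hx : |x| ≤ M)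
    (hxm : |x + m| ≤ M) : |bernoulliFun k (x + m) - bernoulliFun k x| ≤ 2 * k * M ^ k := by
  have hM : 0 ≤ M := (abs_nonneg x).trans hx
  rw [abs_le] at hx hxm
  have hterm : ∀ i ∈ Finset.range m, |k * (x + i) ^ (k - 1)| ≤ k * M ^ (k - 1) := by
    intro i hi
    have him : (i : ℝ) ≤ m := mod_cast (Finset.mem_range.1 hi).le
    rw [abs_mul, abs_pow, Nat.abs_cast]
    gcongr
    exact abs_le.2 ⟨by linarith [(Nat.cast_nonneg i : (0 : ℝ) ≤ i)], by linarith⟩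
  calc |bernoulliFun k (x + m) - bernoulliFun k x|
      = |∑ i ∈ Finset.range m, k * (x + i) ^ (k - 1)| := by
        rw [bernoulliFun_add_natCast, add_sub_cancel_left]
    _ ≤ ∑ _ ∈ Finset.range m, k * M ^ (k - 1) :=
        (Finset.abs_sum_le_sum_abs _ _).trans (Finset.sum_le_sum hterm)
    _ = m * (k * M ^ (k - 1)) := by rw [Finset.sum_const, Finset.card_range, nsmul_eq_mul]
    _ ≤ (2 * M) * (k * M ^ (k - 1)) := by gcongr; linarith
    _ = 2 * k * M ^ k := by
        rcases eq_or_ne k 0 with rfl | hk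
        · simp
        · rw [← mul_pow_sub_one hk M]; ring

lemma abs_bernoulliFun_sub_fract_le (k : ℕ) {x M : ℝ} (hM : 1 ≤ M) (hx : |x| ≤ M) :
    |bernoulliFun k x - bernoulliFun k (Int.fract x)| ≤ 2 * k * M ^ k := by
  have hfract : |Int.fract x| ≤ M := by
    rw [Int.abs_fract]; exact (Int.fract_lt_one x).le.trans hM
  obtain ⟨m, hm | hm⟩ := Int.eq_nat_or_neg ⌊x⌋
  · have hxm : x = Int.fract x + m := by
      rw [← Int.cast_natCast m, ← hm, Int.fract_add_floor]
    rw [hxm] at hx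
    have := abs_bernoulliFun_add_natCast_sub_le k hfract hx
    rwa [← hxm] at this
  · have hxm : Int.fract x = x + m := by
      rw [← Int.self_sub_floor, hm]; push_cast; ring
    rw [hxm] at hfract ⊢
    rw [abs_sub_comm]
    exact abs_bernoulliFun_add_natCast_sub_le k hx hfract

/-- The Bernoulli polynomial `B_k`, scaled so that the leading term of its Fourier series on
`[0, 1]` is exactly `cos (2πx - kπ/2)`. -/
noncomputable def normalizedBernoulli (k : ℕ) (x : ℝ) : ℝ :=
  -((2 * π) ^ k / (2 * (k.factorial : ℝ))) * bernoulliFun k x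

lemma normalizedBernoulli_eq_zero_iff {k : ℕ} {x : ℝ} :
    normalizedBernoulli k x = 0 ↔ BernoulliR k x = 0 := by
  have hcoeff : -((2 * π) ^ k / (2 * (k.factorial : ℝ))) ≠ 0 := neg_ne_zero.2 (by positivity)
  rw [normalizedBernoulli, mul_eq_zero_iff_left hcoeff, bernoulliFun,
    Polynomial.eval_map_algebraMap, BernoulliR]

lemma hasDerivAt_normalizedBernoulli_succ (k : ℕ) (x : ℝ) :
    HasDerivAt (normalizedBernoulli (k + 1)) (2 * π * normalizedBernoulli k x) x := by
  convert! (hasDerivAt_bernoulliFun (k + 1) x).const_mul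
    (-((2 * π) ^ (k + 1) / (2 * ((k + 1).factorial : ℝ)))) using 1
  rw [normalizedBernoulli, Nat.factorial_succ, Nat.add_sub_cancel]
  push_cast
  field_simp
  ring

lemma fourier_add_neg_one_pow_mul_fourier_neg (k : ℕ) (n : ℤ) (x : ℝ) :
    fourier n (x : UnitAddCircle) + (-1 : ℂ) ^ k * fourier (-n) (x : UnitAddCircle) =
      2 * Complex.I ^ k * cos (2 * π * n * x - k * π / 2) := by
  have hI : Complex.I ^ k = Complex.exp (k * (π / 2 * Complex.I)) := by
    rw [Complex.exp_nat_mul, Complex.exp_pi_div_two_mul_I]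
  have hneg_one : (-1 : ℂ) ^ k = Complex.exp (k * (π * Complex.I)) := by
    rw [Complex.exp_nat_mul, Complex.exp_pi_mul_I]
  rw [fourier_coe_apply, fourier_coe_apply, hI, hneg_one, Complex.ofReal_cos,
    mul_right_comm 2 _ (Complex.cos _), Complex.two_cos, add_mul, ← Complex.exp_add,
    ← Complex.exp_add, ← Complex.exp_add]
  push_cast
  congr 2 <;> ring

theorem hasSum_cos_div_pow_normalizedBernoulli {k : ℕ} (hk : 2 ≤ k) {x : ℝ}
    (hx : x ∈ Set.Icc (0 : ℝ) 1) :
    HasSum (fun n : ℕ => cos (2 * π * n * x - k * π / 2) / n ^ k) (normalizedBernoulli k x) := by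
  have hI : (2 * Complex.I ^ k : ℂ) ≠ 0 := mul_ne_zero two_ne_zero (pow_ne_zero k Complex.I_ne_zero)
  rw [← Complex.hasSum_ofReal, ← hasSum_mul_left_iff hI]
  convert! hasSum_one_div_nat_pow_mul_fourier hk hx using 1
  · ext n
    rw [fourier_add_neg_one_pow_mul_fourier_neg]
    push_cast
    ring
  · rw [normalizedBernoulli]
    push_cast
    rw [mul_pow _ Complex.I]
    field_simp

lemma one_div_pow_le_of_two_le {x : ℝ} (hx : 2 ≤ x) {k : ℕ} (hk : 2 ≤ k) :
    1 / x ^ k ≤ 4 * (1 / 2) ^ k * (1 / x ^ 2) := by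
  obtain ⟨m, rfl⟩ := Nat.exists_eq_add_of_le' hk
  calc 1 / x ^ (m + 2) = 1 / x ^ m * (1 / x ^ 2) := by rw [pow_add, one_div_mul_one_div]
    _ ≤ 1 / 2 ^ m * (1 / x ^ 2) := by gcongr
    _ = 4 * (1 / 2) ^ (m + 2) * (1 / x ^ 2) := by rw [pow_add, one_div_pow]; ring

lemma abs_normalizedBernoulli_sub_cos_le_of_mem_Icc {k : ℕ} (hk : 2 ≤ k) {x : ℝ}
    (hx : x ∈ Set.Icc (0 : ℝ) 1) :
    |normalizedBernoulli k x - cos (2 * π * x - k * π / 2)| ≤ 4 * (1 / 2) ^ k * (π ^ 2 / 6) := by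
  set F : ℕ → ℝ := fun n => cos (2 * π * n * x - k * π / 2) / n ^ k with hF
  have hF_one : F 1 = cos (2 * π * x - k * π / 2) := by simp [hF]
  have htail := (hasSum_cos_div_pow_normalizedBernoulli hk hx).sub (hasSum_ite_eq 1 (F 1))
  rw [hF_one] at htail
  refine htail.norm_le_of_bounded (hasSum_zeta_two.mul_left (4 * (1 / 2) ^ k)) fun n => ?_
  rcases Nat.lt_or_ge n 2 with hn | hn
  · interval_cases n
    · simp [show k ≠ 0 by omega]
    · simp only [if_true, Nat.cast_one, mul_one, one_pow, div_one, sub_self, norm_zero]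
      positivity
  · rw [if_neg (by omega), sub_zero, norm_eq_abs, abs_div, abs_pow, Nat.abs_cast]
    calc |cos (2 * π * n * x - k * π / 2)| / (n : ℝ) ^ k ≤ 1 / (n : ℝ) ^ k := by
          gcongr; exact abs_cos_le_one _
      _ ≤ 4 * (1 / 2) ^ k * (1 / (n : ℝ) ^ 2) := one_div_pow_le_of_two_le (mod_cast hn) hk

lemma abs_normalizedBernoulli_sub_fract_le (k : ℕ) {x r : ℝ} (hr : 1 ≤ r * k)
    (hx : |x| ≤ r * k) :
    |normalizedBernoulli k x - normalizedBernoulli k (Int.fract x)| ≤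
      k * (2 * π * r * exp 1) ^ k := by
  have hr0 : 0 ≤ r := (pos_of_mul_pos_left (one_pos.trans_le hr) k.cast_nonneg).le
  have hfactorial : (k : ℝ) ^ k / k.factorial ≤ exp 1 ^ k := by
    rw [← exp_nat_mul, mul_one]
    exact pow_div_factorial_le_exp k k.cast_nonneg k
  rw [normalizedBernoulli, normalizedBernoulli, ← mul_sub, abs_mul, abs_neg,
    abs_of_nonneg (by positivity)]
  calc (2 * π) ^ k / (2 * k.factorial) * |bernoulliFun k x - bernoulliFun k (Int.fract x)|
      ≤ (2 * π) ^ k / (2 * k.factorial) * (2 * k * (r * k) ^ k) := by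
        gcongr; exact abs_bernoulliFun_sub_fract_le k hr hx
    _ = k * (2 * π * r) ^ k * ((k : ℝ) ^ k / k.factorial) := by
        rw [mul_pow r, mul_pow (2 * π) r]
        field_simp
    _ ≤ k * (2 * π * r) ^ k * exp 1 ^ k := by gcongr
    _ = k * (2 * π * r * exp 1) ^ k := by rw [mul_pow _ (exp 1), mul_assoc]

lemma abs_normalizedBernoulli_sub_cos_le {k : ℕ} (hk : 2 ≤ k) {x r : ℝ} (hr : 1 ≤ r * k)
    (hx : |x| ≤ r * k) :
    |normalizedBernoulli k x - cos (2 * π * x - k * π / 2)| ≤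
      k * (2 * π * r * exp 1) ^ k + 4 * (1 / 2) ^ k * (π ^ 2 / 6) := by
  have hcos : cos (2 * π * Int.fract x - k * π / 2) = cos (2 * π * x - k * π / 2) := by
    rw [← cos_sub_int_mul_two_pi (2 * π * x - k * π / 2) ⌊x⌋, ← Int.self_sub_floor]
    ring_nf
  have hunit := abs_normalizedBernoulli_sub_cos_le_of_mem_Icc hk
    ⟨Int.fract_nonneg x, (Int.fract_lt_one x).le⟩
  rw [hcos] at hunit
  exact (abs_sub_le _ _ _).trans (add_le_add (abs_normalizedBernoulli_sub_fract_le k hr hx) hunit)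

theorem eventually_abs_normalizedBernoulli_sub_cos_lt {r ε : ℝ} (hr0 : 0 < r)
    (hr : r < 1 / (2 * π * exp 1)) (hε : 0 < ε) :
    ∀ᶠ k : ℕ in atTop, ∀ x : ℝ, |x| ≤ r * k →
      |normalizedBernoulli k x - cos (2 * π * x - k * π / 2)| < ε := by
  have hq : 2 * π * r * exp 1 < 1 := by
    rw [lt_div_iff₀ (by positivity)] at hr
    linarith
  have hshift := tendsto_self_mul_const_pow_of_lt_one (by positivity) hq
  have hharmonics : Tendsto (fun k : ℕ => 4 * (1 / 2 : ℝ) ^ k * (π ^ 2 / 6)) atTop (nhds 0) := by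
    simpa using ((tendsto_pow_atTop_nhds_zero_of_lt_one (r := (1 / 2 : ℝ)) (by norm_num)
      (by norm_num)).const_mul 4).mul_const (π ^ 2 / 6)
  have herror := hshift.add hharmonics
  rw [add_zero] at herror
  filter_upwards [herror.eventually_lt_const hε, eventually_ge_atTop 2,
    tendsto_natCast_atTop_atTop.eventually_ge_atTop (1 / r)] with k hlt hk hkr x hx
  refine (abs_normalizedBernoulli_sub_cos_le hk ?_ hx).trans_lt hlt
  rwa [div_le_iff₀' hr0] at hkr

lemma abs_ncard_zeros_normalizedBernoulli_sub_le {k : ℕ} {a b : ℝ} (hab : a ≤ b)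
    (hsucc : ∀ x ∈ Set.Icc a b,
      |normalizedBernoulli (k + 1) x - cos (2 * π * x - (k + 1 : ℕ) * π / 2)| < √2 / 2)
    (hself : ∀ x ∈ Set.Icc a b,
      |normalizedBernoulli k x - cos (2 * π * x - k * π / 2)| < √2 / 2) :
    |({x | normalizedBernoulli (k + 1) x = 0 ∧ x ∈ Set.Icc a b}.ncard : ℝ) - 2 * (b - a)| ≤ 2 := by
  have hsin (x : ℝ) : cos (2 * π * x - k * π / 2) = -sin (2 * π * x + -((k + 1 : ℕ) * π / 2)) := by
    rw [← cos_add_pi_div_two]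
    push_cast
    ring_nf
  have hcount := abs_ncard_zeros_sub_le_of_near_cos_affine two_pi_pos hab
    (fun x _ => hasDerivAt_normalizedBernoulli_succ k x) hsucc
    (fun x hx => by simpa only [hsin, sub_neg_eq_add] using hself x hx)
  rwa [mul_right_comm, mul_div_cancel_right₀ _ pi_ne_zero] at hcount

theorem eventually_abs_ncard_zeros_bernoulliR_sub_le {a b : ℝ} (hab : a ≤ b)
    (ha : -(1 / (2 * π * exp 1)) < a) (hb : b < 1 / (2 * π * exp 1)) :
    ∀ᶠ n : ℕ in atTop,
      |({x | BernoulliR n x = 0 ∧ x ∈ Set.Icc (n * a) (n * b)}.ncard : ℝ) -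
        2 * (b - a) * n| ≤ 2 := by
  set ρ := max |a| |b| with hρ
  have hρ0 : 0 ≤ ρ := (abs_nonneg a).trans (le_max_left _ _)
  obtain ⟨r, hρr, hr⟩ : ∃ r, ρ < r ∧ r < 1 / (2 * π * exp 1) := exists_between <|
    max_lt (abs_lt.2 ⟨ha, hab.trans_lt hb⟩) (abs_lt.2 ⟨ha.trans_le hab, hb⟩)
  have hnear := eventually_abs_normalizedBernoulli_sub_cos_lt (hρ0.trans_lt hρr) hr
    (show 0 < √2 / 2 by positivity)
  rw [← map_add_atTop_eq_nat 1, eventually_map]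
  filter_upwards [hnear, (tendsto_add_atTop_nat 1).eventually hnear,
    tendsto_natCast_atTop_atTop.eventually_ge_atTop (ρ / (r - ρ))] with k hself hsucc hk
  rw [div_le_iff₀ (sub_pos.2 hρr)] at hk
  have habs {x : ℝ} (hx : x ∈ Set.Icc ((k + 1 : ℕ) * a) ((k + 1 : ℕ) * b)) : |x| ≤ r * k := by
    have hx' : |x| ≤ max |(k + 1 : ℕ) * a| |(k + 1 : ℕ) * b| := abs_le_max_abs_abs hx.1 hx.2
    rw [abs_mul, abs_mul, Nat.abs_cast, ← mul_max_of_nonneg _ _ (Nat.cast_nonneg _), ← hρ] at hx'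
    push_cast at hx'
    linarith
  have hcount := abs_ncard_zeros_normalizedBernoulli_sub_le
    (mul_le_mul_of_nonneg_left hab (k + 1).cast_nonneg)
    (fun x hx => hsucc x ((habs hx).trans (by push_cast; linarith)))
    (fun x hx => hself x (habs hx))
  simp only [normalizedBernoulli_eq_zero_iff] at hcount
  convert hcount using 3
  ring

lemma tendsto_div_natCast_of_eventually_abs_sub_le {u : ℕ → ℝ} {l C : ℝ}
    (h : ∀ᶠ n : ℕ in atTop, |u n - l * n| ≤ C) :
    Tendsto (fun n : ℕ => u n / n) atTop (nhds l) := by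
  rw [tendsto_iff_norm_sub_tendsto_zero]
  refine squeeze_zero' (Eventually.of_forall fun n => norm_nonneg _) ?_
    (tendsto_const_div_atTop_nhds_zero_nat C)
  filter_upwards [h, eventually_gt_atTop 0] with n hn hn0
  have hn0' : (0 : ℝ) < n := mod_cast hn0
  rw [norm_eq_abs, div_sub' hn0'.ne', abs_div, Nat.abs_cast, mul_comm]
  gcongr

/-- The rescaled real zeros of the Bernoulli polynomials are asymptotically uniformly
distributed on `[-1/(2πe), 1/(2πe)]`: if `[a, b] ⊆ (-1/(2πe), 1/(2πe))`, then the number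
of real zeros of `Bₙ` in `[na, nb]`, divided by `n`, tends to `2(b - a)`. -/
theorem bernoulli_real_roots_equidistributed
    (a b : ℝ) (hab : a < b)
    (ha : -(1 / (2 * π * Real.exp 1)) < a) (hb : b < 1 / (2 * π * Real.exp 1)) :
    Tendsto
      (fun n : ℕ =>
        (Nat.card {x : ℝ | BernoulliR n x = 0 ∧ (n : ℝ) * a ≤ x ∧ x ≤ (n : ℝ) * b} : ℝ) /
          (n : ℝ))
      atTop (nhds (2 * (b - a))) :=
  tendsto_div_natCast_of_eventually_abs_sub_le
    (eventually_abs_ncard_zeros_bernoulliR_sub_le hab.le ha hb)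
end
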